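/- Let n ≥ 1, ω ∈ ℕ, γ > 0, and E_ω > 0. For each s > ω let c_s ∈ ℕ, ϑ_s ≥ 1, and ε_s > 0, and assume: (i) ∑_{s>ω} c_s ϑ_s² ε_s² / n ≤ E_ω (the total MSE reduction beyond scale ω cannot exceed the remaining MSE E_ω); (ii) ε_s ≥ ε_{ω+1} for all s > ω (the tolerances are nondecreasing beyond scale ω); and (iii) ε_{ω+1} ≥ γ √(n E_ω) / ϑ_{ω+1}². Then the number of sparse-representation elements missed by truncating at scale ω is bounded: ∑_{s>ω} c_s ≤ n E_ω / ε_{ω+1}² ≤ ϑ_{ω+1}⁴ / γ². -/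

import Mathlib

/-!
Each scale `s > ω` satisfies `c_s ≤ (n / ε_{ω+1}²) · (c_s ϑ_s² ε_s² / n)`, because `ϑ_s ≥ 1` and
`ε_s ≥ ε_{ω+1}`. Summing over `s` by comparison and using the bound on the total reduction gives
the first inequality; the second is the squared lower bound on `ε_{ω+1}`.
-/

/-- Bound on the number of sparse-representation elements missed by truncating
at scale `ω`: if the total MSE reduction beyond scale `ω` does not exceed the
remaining MSE `E_ω`, the tolerances are nondecreasing beyond `ω`, `ϑ_s ≥ 1`,
and `ε_{ω+1} ≥ γ√(nE_ω)/ϑ_{ω+1}²`, then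
`∑_{s>ω} c_s ≤ nE_ω/ε_{ω+1}² ≤ ϑ_{ω+1}⁴/γ²`. -/
theorem missed_sparse_elements_bound
    (n : ℕ) (hn : 1 ≤ n) (ω : ℕ) (γ : ℝ) (hγ : 0 < γ)
    (Eω : ℝ) (hEω : 0 < Eω)
    (c : ℕ → ℕ) (ϑ ε : ℕ → ℝ)
    (hϑ : ∀ s, ω < s → 1 ≤ ϑ s)
    (hε : ∀ s, ω < s → 0 < ε s)
    (hsum : Summable (fun s : {s : ℕ // ω < s} =>
      (c s.1 : ℝ) * ϑ s.1 ^ 2 * ε s.1 ^ 2 / n))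
    (hred : (∑' s : {s : ℕ // ω < s}, (c s.1 : ℝ) * ϑ s.1 ^ 2 * ε s.1 ^ 2 / n) ≤ Eω)
    (hmono : ∀ s, ω < s → ε (ω + 1) ≤ ε s)
    (hinit : γ * Real.sqrt (n * Eω) / ϑ (ω + 1) ^ 2 ≤ ε (ω + 1)) :
    (∑' s : {s : ℕ // ω < s}, (c s.1 : ℝ)) ≤ n * Eω / ε (ω + 1) ^ 2 ∧
    n * Eω / ε (ω + 1) ^ 2 ≤ ϑ (ω + 1) ^ 4 / γ ^ 2 := by
  have hn0 : (0 : ℝ) < n := by exact_mod_cast hn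
  have he : 0 < ε (ω + 1) := hε _ (Nat.lt_succ_self ω)
  have ht : 0 < ϑ (ω + 1) := lt_of_lt_of_le one_pos (hϑ _ (Nat.lt_succ_self ω))
  constructor
  · have key : ∀ s : {s : ℕ // ω < s}, (c s.1 : ℝ) ≤
        n / ε (ω + 1) ^ 2 * ((c s.1 : ℝ) * ϑ s.1 ^ 2 * ε s.1 ^ 2 / n) := by
      intro s
      have h1 : 1 ≤ ϑ s.1 ^ 2 := one_le_pow₀ (hϑ s.1 s.2)
      have h2 : ε (ω + 1) ^ 2 ≤ ε s.1 ^ 2 := pow_le_pow_left₀ he.le (hmono s.1 s.2) 2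
      have h3 : ε (ω + 1) ^ 2 ≤ ϑ s.1 ^ 2 * ε s.1 ^ 2 :=
        h2.trans (le_mul_of_one_le_left (sq_nonneg _) h1)
      have h4 : n / ε (ω + 1) ^ 2 * ((c s.1 : ℝ) * ϑ s.1 ^ 2 * ε s.1 ^ 2 / n) =
          (c s.1 : ℝ) * (ϑ s.1 ^ 2 * ε s.1 ^ 2) / ε (ω + 1) ^ 2 := by
        field_simp
      rw [h4, le_div_iff₀ (by positivity)]
      exact mul_le_mul_of_nonneg_left h3 (Nat.cast_nonneg _)
    have hs := hsum.mul_left ((n : ℝ) / ε (ω + 1) ^ 2)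
    have hc : Summable (fun s : {s : ℕ // ω < s} => (c s.1 : ℝ)) :=
      Summable.of_nonneg_of_le (fun _ => Nat.cast_nonneg _) key hs
    calc (∑' s : {s : ℕ // ω < s}, (c s.1 : ℝ))
        ≤ ∑' s : {s : ℕ // ω < s},
            n / ε (ω + 1) ^ 2 * ((c s.1 : ℝ) * ϑ s.1 ^ 2 * ε s.1 ^ 2 / n) :=
          hc.tsum_le_tsum key hs
      _ = n / ε (ω + 1) ^ 2 *
            ∑' s : {s : ℕ // ω < s}, (c s.1 : ℝ) * ϑ s.1 ^ 2 * ε s.1 ^ 2 / n := tsum_mul_left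
      _ ≤ n / ε (ω + 1) ^ 2 * Eω := mul_le_mul_of_nonneg_left hred (by positivity)
      _ = n * Eω / ε (ω + 1) ^ 2 := by ring
  · rw [div_le_iff₀ (by positivity)] at hinit
    have h := pow_le_pow_left₀ (by positivity) hinit 2
    rw [mul_pow, Real.sq_sqrt (by positivity)] at h
    rw [div_le_div_iff₀ (by positivity) (by positivity)]
    linarith [h, show (ε (ω + 1) * ϑ (ω + 1) ^ 2) ^ 2 = ϑ (ω + 1) ^ 4 * ε (ω + 1) ^ 2 by ring]
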